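/- Let M1, M2, N1, N2 be positive integers. For a positive natural number κ, let D_in(κ) denote the convex hull (in ℝ⁴) of the set of points of D_out(κM1, κM2, κN1, κN2) all four of whose coordinates are integers. Then the set { d ∈ ℝ⁴ : there exists a positive natural number κ such that κ·d ∈ D_in(κ) } equals D_out(M1, M2, N1, N2). -/

import Mathlib

/-- The outer-bound region on the degrees of freedom of the MIMO X channel, as a
set of quadruples of (nonnegative) reals, here encoded as vectors in `Fin 4 → ℝ`
with coordinates `(d11, d12, d21, d22) = (d 0, d 1, d 2, d 3)`. -/
def Dout (M1 M2 N1 N2 : ℝ) : Set (Fin 4 → ℝ) :=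
  {d | 0 ≤ d 0 ∧ 0 ≤ d 1 ∧ 0 ≤ d 2 ∧ 0 ≤ d 3 ∧
    d 0 + d 1 + d 2 ≤ max N1 M1 ∧
    d 0 + d 1 + d 3 ≤ max N1 M2 ∧
    d 0 + d 2 + d 3 ≤ max N2 M1 ∧
    d 1 + d 2 + d 3 ≤ max N2 M2 ∧
    d 0 + d 1 ≤ N1 ∧
    d 2 + d 3 ≤ N2 ∧
    d 0 + d 2 ≤ M1 ∧
    d 1 + d 3 ≤ M2}

/-!
For any set `P`, the points `d` with `κ • d` in the convex hull of the integral points of `κ • P`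
for some `κ > 0` are those in the convex hull of the rational points of `P`: scaling back,
`P ∩ κ⁻¹ • ℤⁿ` grows along divisibility of `κ` and exhausts `P ∩ ℚⁿ`. It remains to see that a
rational polyhedron is the convex hull of its rational points. Replace a real point `d` by
`f ∘ d` for a `ℚ`-linear `f : ℝ → ℚ` with `f 1 = 1`. This is a rational point at which every
inequality tight at `d` is still tight, and the slack ones survive if `f ∘ d` is close to `d`.
Writing the coordinates of `d` in a finite `ℚ`-independent set of reals containing `1`, one can
move the values of `f` on that set, except `f 1`, over the corners of a small box, and so obtains
`d` as a convex combination of such points.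
-/

open Set Topology Matrix
open scoped Pointwise

/-- The lattice `ℤⁿ` inside `ℝⁿ`. -/
def intPoints (ι : Type*) : Set (ι → ℝ) :=
  {x | ∀ i, ∃ z : ℤ, x i = z}

/-- The set `ℚⁿ` of rational points of `ℝⁿ`. -/
def ratPoints (ι : Type*) : Set (ι → ℝ) :=
  {x | ∀ i, ∃ q : ℚ, x i = q}

section DilatedIntegerPoints

variable {ι : Type*}

theorem exists_natCast_mul_eq_intCast_of_dvd {k l : ℕ} (hkl : k ∣ l) {x : ℝ}
    (hx : ∃ z : ℤ, k * x = z) : ∃ z : ℤ, l * x = z := by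
  obtain ⟨m, rfl⟩ := hkl
  obtain ⟨z, hz⟩ := hx
  refine ⟨m * z, ?_⟩
  push_cast
  rw [← hz]
  ring

theorem mem_ratPoints_of_smul_mem_intPoints {k : ℕ} (hk : 0 < k) {x : ι → ℝ}
    (hx : (k : ℝ) • x ∈ intPoints ι) : x ∈ ratPoints ι := by
  intro i
  obtain ⟨z, hz⟩ := hx i
  have hk' : (k : ℝ) ≠ 0 := by positivity
  refine ⟨z / k, ?_⟩
  push_cast
  rw [← hz, Pi.smul_apply, smul_eq_mul, mul_div_cancel_left₀ _ hk']

theorem exists_pos_smul_mem_intPoints [Finite ι] {x : ι → ℝ} (hx : x ∈ ratPoints ι) :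
    ∃ k : ℕ, 0 < k ∧ (k : ℝ) • x ∈ intPoints ι := by
  have := Fintype.ofFinite ι
  choose q hq using hx
  refine ⟨∏ i, (q i).den, Finset.prod_pos fun i _ => (q i).den_pos, fun i => ?_⟩
  refine exists_natCast_mul_eq_intCast_of_dvd (Finset.dvd_prod_of_mem _ (Finset.mem_univ i))
    ⟨(q i).num, ?_⟩
  rw [hq]
  exact_mod_cast (q i).den_mul_eq_num

theorem mem_inv_smul_intPoints_iff {k : ℕ+} {x : ι → ℝ} :
    x ∈ ((k : ℕ) : ℝ)⁻¹ • intPoints ι ↔ ((k : ℕ) : ℝ) • x ∈ intPoints ι :=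
  mem_inv_smul_set_iff₀ (Nat.cast_ne_zero.2 k.ne_zero) _ _

theorem ratPoints_eq_iUnion_inv_smul_intPoints [Finite ι] :
    ratPoints ι = ⋃ k : ℕ+, ((k : ℕ) : ℝ)⁻¹ • intPoints ι := by
  ext x
  simp only [mem_iUnion, mem_inv_smul_intPoints_iff]
  constructor
  · intro hx
    obtain ⟨k, hk, hkx⟩ := exists_pos_smul_mem_intPoints hx
    exact ⟨⟨k, hk⟩, hkx⟩
  · rintro ⟨k, hkx⟩
    exact mem_ratPoints_of_smul_mem_intPoints k.pos hkx

theorem inv_smul_intPoints_subset_of_dvd {k l : ℕ+} (hkl : k ∣ l) :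
    ((k : ℕ) : ℝ)⁻¹ • intPoints ι ⊆ ((l : ℕ) : ℝ)⁻¹ • intPoints ι := by
  intro x hx
  rw [mem_inv_smul_intPoints_iff] at hx ⊢
  exact fun i => exists_natCast_mul_eq_intCast_of_dvd (PNat.dvd_iff.1 hkl) (hx i)

theorem directed_inter_inv_smul_intPoints (P : Set (ι → ℝ)) :
    Directed (· ⊆ ·) fun k : ℕ+ => P ∩ ((k : ℕ) : ℝ)⁻¹ • intPoints ι :=
  fun k l => ⟨k * l,
    inter_subset_inter_right _ (inv_smul_intPoints_subset_of_dvd (dvd_mul_right k l)),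
    inter_subset_inter_right _ (inv_smul_intPoints_subset_of_dvd (dvd_mul_left l k))⟩

end DilatedIntegerPoints

theorem convexHull_iUnion_of_directed {𝕜 E ι : Type*} [Semiring 𝕜] [PartialOrder 𝕜]
    [AddCommMonoid E] [Module 𝕜 E] {s : ι → Set E} (hs : Directed (· ⊆ ·) s) :
    convexHull 𝕜 (⋃ i, s i) = ⋃ i, convexHull 𝕜 (s i) := by
  apply Subset.antisymm
  · refine convexHull_min (iUnion_mono fun i => subset_convexHull 𝕜 _) ?_
    have hhull : Directed (· ⊆ ·) fun i => convexHull 𝕜 (s i) := fun i j =>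
      let ⟨k, hik, hjk⟩ := hs i j
      ⟨k, convexHull_mono hik, convexHull_mono hjk⟩
    exact hhull.convex_iUnion fun i => convex_convexHull 𝕜 (s i)
  · exact iUnion_subset fun i => convexHull_mono (subset_iUnion s i)

theorem smul_mem_convexHull_smul_inter_intPoints {ι : Type*} {κ : ℝ} (hκ : κ ≠ 0)
    {P : Set (ι → ℝ)} {d : ι → ℝ} :
    κ • d ∈ convexHull ℝ (κ • P ∩ intPoints ι) ↔ d ∈ convexHull ℝ (P ∩ κ⁻¹ • intPoints ι) := by
  have hscale : κ • P ∩ intPoints ι = κ • (P ∩ κ⁻¹ • intPoints ι) := by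
    rw [smul_set_inter₀ hκ, smul_inv_smul₀ hκ]
  rw [hscale, convexHull_smul, smul_mem_smul_set_iff₀ hκ]

theorem exists_smul_mem_convexHull_intPoints_iff {ι : Type*} [Finite ι] {P : Set (ι → ℝ)}
    {d : ι → ℝ} :
    (∃ κ : ℕ, 0 < κ ∧ (κ : ℝ) • d ∈ convexHull ℝ ((κ : ℝ) • P ∩ intPoints ι)) ↔
      d ∈ convexHull ℝ (P ∩ ratPoints ι) := by
  rw [ratPoints_eq_iUnion_inv_smul_intPoints, inter_iUnion,
    convexHull_iUnion_of_directed (directed_inter_inv_smul_intPoints P), mem_iUnion]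
  constructor
  · rintro ⟨κ, hκ, hd⟩
    exact ⟨⟨κ, hκ⟩, (smul_mem_convexHull_smul_inter_intPoints (by positivity)).1 hd⟩
  · rintro ⟨κ, hd⟩
    exact ⟨κ, κ.pos, (smul_mem_convexHull_smul_inter_intPoints
      (Nat.cast_ne_zero.2 κ.ne_zero)).2 hd⟩

section RationalApproximation

theorem mem_convexHull_range_ratCast_of_mem_nhds {x : ℝ} {U : Set ℝ} (hU : U ∈ 𝓝 x) :
    x ∈ convexHull ℝ (U ∩ {y | (∃ q : ℚ, y = q) ∧ ((∃ q : ℚ, x = q) → y = x)}) := by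
  by_cases hx : ∃ q : ℚ, x = q
  · exact subset_convexHull ℝ _ ⟨mem_of_mem_nhds hU, hx, fun _ => rfl⟩
  · obtain ⟨a, b, ⟨hax, hxb⟩, hab⟩ := mem_nhds_iff_exists_Ioo_subset.1 hU
    obtain ⟨p, hap, hpx⟩ := exists_rat_btwn hax
    obtain ⟨q, hxq, hqb⟩ := exists_rat_btwn hxb
    refine segment_subset_convexHull (x := (p : ℝ)) (y := (q : ℝ)) ?_ ?_ ?_
    · exact ⟨hab (mem_Ioo.2 ⟨hap, hpx.trans hxb⟩), ⟨p, rfl⟩, fun h => absurd h hx⟩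
    · exact ⟨hab (mem_Ioo.2 ⟨hax.trans hxq, hqb⟩), ⟨q, rfl⟩, fun h => absurd h hx⟩
    · rw [segment_eq_Icc (hpx.trans hxq).le]
      exact ⟨hpx.le, hxq.le⟩

theorem mem_convexHull_ratPoints_of_mem_nhds {ι : Type*} [Finite ι] {x : ι → ℝ}
    {U : Set (ι → ℝ)} (hU : U ∈ 𝓝 x) :
    x ∈ convexHull ℝ (U ∩ {y ∈ ratPoints ι | ∀ i, (∃ q : ℚ, x i = q) → y i = x i}) := by
  rw [nhds_pi, Filter.mem_pi'] at hU
  obtain ⟨I, V, hV, hVU⟩ := hU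
  have hbox := mem_convexHull_pi (s := univ)
    fun i _ => mem_convexHull_range_ratCast_of_mem_nhds (hV i)
  refine convexHull_mono ?_ hbox
  intro y hy
  exact ⟨hVU (mem_pi.2 fun i _ => (hy i trivial).1), fun i => (hy i trivial).2.1,
    fun i => (hy i trivial).2.2⟩

theorem exists_linearMap_apply_eq_of_linearIndependent {K V V' ι : Type*} [DivisionRing K]
    [AddCommGroup V] [Module K V] [AddCommGroup V'] [Module K V'] {v : ι → V}
    (hv : LinearIndependent K v) (w : ι → V') : ∃ f : V →ₗ[K] V', ∀ i, f (v i) = w i := by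
  obtain ⟨f, hf⟩ := LinearMap.exists_extend ((Module.Basis.span hv).constr ℕ w)
  refine ⟨f, fun i => ?_⟩
  calc
    f (v i) = (f ∘ₗ (Submodule.span K (range v)).subtype) (Module.Basis.span hv i) := by
      simp only [LinearMap.comp_apply, Submodule.subtype_apply, Module.Basis.span_apply]
    _ = w i := by rw [hf, Module.Basis.constr_basis]

theorem exists_linearMap_one_eq_one_of_mem_ratPoints {b : Set ℝ} (hb : LinearIndepOn ℚ id b)
    (h1b : 1 ∈ b) {t : b → ℝ} (ht : t ∈ ratPoints b) (ht1 : t ⟨1, h1b⟩ = 1) :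
    ∃ f : ℝ →ₗ[ℚ] ℚ, f 1 = 1 ∧ ∀ k : b, f k = t k := by
  choose q hq using ht
  obtain ⟨f, hf⟩ := exists_linearMap_apply_eq_of_linearIndependent hb q
  have hft (k : b) : f k = t k := by rw [hq, ← hf, id]
  exact ⟨f, by exact_mod_cast (hft ⟨1, h1b⟩).trans ht1, hft⟩

theorem exists_finset_linearIndepOn_rat_one_mem {ι : Type*} [Finite ι] (d : ι → ℝ) :
    ∃ b : Finset ℝ, LinearIndepOn ℚ id (b : Set ℝ) ∧ 1 ∈ b ∧
      ∃ c : ι → b → ℚ, ∀ i, d i = ∑ k, c i k • (k : ℝ) := by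
  obtain ⟨b, hbd, h1b, hspan, hb⟩ := exists_linearIndepOn_id_extension
    (LinearIndepOn.singleton (R := ℚ) (v := id) (one_ne_zero (α := ℝ)))
    (singleton_subset_iff.2 (mem_insert 1 (range d)))
  lift b to Finset ℝ using ((finite_range d).insert 1).subset hbd
  have hcoord (i : ι) : ∃ c : b → ℚ, ∑ k, c k • (k : ℝ) = d i := by
    rw [← Submodule.mem_span_range_iff_exists_fun, Subtype.range_coe]
    exact hspan (mem_insert_of_mem _ (mem_range_self i))
  choose c hc using hcoord
  exact ⟨b, hb, h1b rfl, c, fun i => (hc i).symm⟩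

theorem mem_convexHull_comp_linearMap_of_mem_nhds {ι : Type*} [Finite ι] {d : ι → ℝ}
    {U : Set (ι → ℝ)} (hU : U ∈ 𝓝 d) :
    d ∈ convexHull ℝ (U ∩ {x | ∃ f : ℝ →ₗ[ℚ] ℚ, f 1 = 1 ∧ ∀ i, x i = f (d i)}) := by
  obtain ⟨b, hb, h1b, c, hc⟩ := exists_finset_linearIndepOn_rat_one_mem d
  let φ : (b → ℝ) →ₗ[ℝ] ι → ℝ := (Matrix.of fun i k => (c i k : ℝ)).mulVecLin
  have hφ (t : b → ℝ) (i : ι) : φ t i = ∑ k, c i k • t k := by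
    simp only [φ, mulVecLin_apply, mulVec, dotProduct, of_apply, Rat.smul_def]
  have hφb : φ Subtype.val = d := funext fun i => (hφ _ i).trans (hc i).symm
  have hφU : φ ⁻¹' U ∈ 𝓝 (Subtype.val : b → ℝ) :=
    φ.continuous_of_finiteDimensional.continuousAt.preimage_mem_nhds (by rwa [hφb])
  have himage := mem_image_of_mem φ (mem_convexHull_ratPoints_of_mem_nhds hφU)
  rw [φ.image_convexHull, hφb] at himage
  refine convexHull_mono (image_subset_iff.2 ?_) himage
  rintro t ⟨htU, htrat, htfix⟩
  obtain ⟨f, hf1, hft⟩ := exists_linearMap_one_eq_one_of_mem_ratPoints hb h1b htrat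
    (htfix ⟨1, h1b⟩ ⟨1, Rat.cast_one.symm⟩)
  refine ⟨htU, f, hf1, fun i => ?_⟩
  calc
    φ t i = ∑ k, c i k • (f k : ℝ) := by simp only [hφ, hft]
    _ = f (∑ k, c i k • (k : ℝ)) := by
      simp only [map_sum, map_smul, smul_eq_mul, Rat.cast_sum, Rat.cast_mul]
      simp only [Rat.smul_def]
    _ = f (d i) := by rw [← hc]

end RationalApproximation

section RationalPolyhedron

variable {m n : Type*} [Fintype n]

/-- The real polyhedron `A x ≤ c` cut out by a rational matrix `A` and a rational vector `c`. -/
def ratPolyhedron (A : Matrix m n ℚ) (c : m → ℚ) : Set (n → ℝ) :=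
  {x | ∀ i, (A.map (Rat.castHom ℝ) *ᵥ x) i ≤ c i}

theorem convex_ratPolyhedron (A : Matrix m n ℚ) (c : m → ℚ) : Convex ℝ (ratPolyhedron A c) :=
  (convex_Iic fun i => (c i : ℝ)).linear_preimage (A.map (Rat.castHom ℝ)).mulVecLin

theorem mulVec_comp_eq_of_mulVec_eq {A : Matrix m n ℚ} {d : n → ℝ} {i : m} {r : ℚ}
    (hd : (A.map (Rat.castHom ℝ) *ᵥ d) i = r) {f : ℝ →ₗ[ℚ] ℚ} (hf : f 1 = 1) :
    (A *ᵥ (f ∘ d)) i = r := by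
  have hfr : f r = r := by simpa [Rat.smul_def, hf] using f.map_smul r 1
  rw [← hfr, ← hd]
  simp only [mulVec, dotProduct, map_sum, map_apply, Rat.coe_castHom, ← Rat.smul_def, map_smul,
    Function.comp_apply, smul_eq_mul]

theorem ratPolyhedron_subset_convexHull [Finite m] (A : Matrix m n ℚ) (c : m → ℚ) :
    ratPolyhedron A c ⊆ convexHull ℝ (ratPolyhedron A c ∩ ratPoints n) := by
  intro d hd
  let L := (A.map (Rat.castHom ℝ)).mulVecLin
  have hslack : {x | ∀ i, L d i < c i → L x i < c i} ∈ 𝓝 d := by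
    refine Filter.eventually_all.2 fun i => ?_
    by_cases hi : L d i < c i
    · have hL : Continuous fun x => L x i :=
        (continuous_apply i).comp L.continuous_of_finiteDimensional
      exact (hL.continuousAt.eventually_lt continuousAt_const hi).mono fun _ hx _ => hx
    · exact Filter.Eventually.of_forall fun _ h => absurd h hi
  refine convexHull_mono ?_ (mem_convexHull_comp_linearMap_of_mem_nhds hslack)
  rintro x ⟨hx, f, hf, hxf⟩
  refine ⟨fun i => ?_, fun j => ⟨f (d j), hxf j⟩⟩
  rcases (hd i).lt_or_eq with hi | hi
  · exact (hx i hi).le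
  · obtain rfl : x = Rat.castHom ℝ ∘ f ∘ d := funext hxf
    rw [← RingHom.map_mulVec, mulVec_comp_eq_of_mulVec_eq hi hf]
    rfl

theorem convexHull_ratPolyhedron_inter_ratPoints [Finite m] (A : Matrix m n ℚ) (c : m → ℚ) :
    convexHull ℝ (ratPolyhedron A c ∩ ratPoints n) = ratPolyhedron A c :=
  (convexHull_min inter_subset_left (convex_ratPolyhedron A c)).antisymm
    (ratPolyhedron_subset_convexHull A c)

end RationalPolyhedron

section OuterBound

theorem Dout_smul {κ : ℝ} (hκ : 0 < κ) (M1 M2 N1 N2 : ℝ) :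
    Dout (κ * M1) (κ * M2) (κ * N1) (κ * N2) = κ • Dout M1 M2 N1 N2 := by
  ext d
  obtain ⟨x, rfl⟩ : ∃ x, κ • x = d := ⟨κ⁻¹ • d, smul_inv_smul₀ hκ.ne' d⟩
  rw [smul_mem_smul_set_iff₀ hκ.ne']
  simp only [Dout, mem_ofPred_eq, Pi.smul_apply, smul_eq_mul, ← mul_add,
    ← mul_max_of_nonneg _ _ hκ.le, mul_le_mul_iff_right₀ hκ, mul_nonneg_iff_of_pos_left hκ]

/-- The coefficients of the inequalities defining `Dout`, in the same order. -/
def doutMatrix : Matrix (Fin 12) (Fin 4) ℚ :=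
  !![-1, 0, 0, 0; 0, -1, 0, 0; 0, 0, -1, 0; 0, 0, 0, -1;
     1, 1, 1, 0; 1, 1, 0, 1; 1, 0, 1, 1; 0, 1, 1, 1;
     1, 1, 0, 0; 0, 0, 1, 1; 1, 0, 1, 0; 0, 1, 0, 1]

/-- The right-hand sides of the inequalities defining `Dout`, in the same order. -/
def doutBound (M1 M2 N1 N2 : ℚ) : Fin 12 → ℚ :=
  ![0, 0, 0, 0, max N1 M1, max N1 M2, max N2 M1, max N2 M2, N1, N2, M1, M2]

theorem Dout_eq_ratPolyhedron (M1 M2 N1 N2 : ℚ) :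
    Dout M1 M2 N1 N2 = ratPolyhedron doutMatrix (doutBound M1 M2 N1 N2) := by
  ext d
  simp [Dout, ratPolyhedron, doutMatrix, doutBound, Fin.forall_fin_succ, mulVec, dotProduct,
    Fin.sum_univ_succ, add_assoc]

theorem stmt_11_general (M1 M2 N1 N2 : ℚ) :
    {d : Fin 4 → ℝ | ∃ κ : ℕ, 0 < κ ∧
      (κ : ℝ) • d ∈ convexHull ℝ
        {x : Fin 4 → ℝ |
          x ∈ Dout (κ * M1) (κ * M2) (κ * N1) (κ * N2) ∧
          ∀ i : Fin 4, ∃ z : ℤ, x i = (z : ℝ)}} =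
    Dout M1 M2 N1 N2 := by
  ext d
  calc
    _ ↔ ∃ κ : ℕ, 0 < κ ∧
        (κ : ℝ) • d ∈ convexHull ℝ ((κ : ℝ) • Dout M1 M2 N1 N2 ∩ intPoints (Fin 4)) :=
      exists_congr fun κ => and_congr_right fun hκ => by
        rw [← Dout_smul (Nat.cast_pos.2 hκ)]; rfl
    _ ↔ d ∈ convexHull ℝ (Dout M1 M2 N1 N2 ∩ ratPoints (Fin 4)) :=
      exists_smul_mem_convexHull_intPoints_iff
    _ ↔ d ∈ Dout M1 M2 N1 N2 := by
      rw [Dout_eq_ratPolyhedron, convexHull_ratPolyhedron_inter_ratPoints]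

end OuterBound

theorem stmt_11 (M1 M2 N1 N2 : ℕ) (hM1 : 0 < M1) (hM2 : 0 < M2)
    (hN1 : 0 < N1) (hN2 : 0 < N2) :
    {d : Fin 4 → ℝ | ∃ κ : ℕ, 0 < κ ∧
      (κ : ℝ) • d ∈ convexHull ℝ
        {x : Fin 4 → ℝ |
          x ∈ Dout ((κ * M1 : ℕ) : ℝ) ((κ * M2 : ℕ) : ℝ)
              ((κ * N1 : ℕ) : ℝ) ((κ * N2 : ℕ) : ℝ) ∧
          ∀ i : Fin 4, ∃ z : ℤ, x i = (z : ℝ)}} =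
    Dout (M1 : ℝ) (M2 : ℝ) (N1 : ℝ) (N2 : ℝ) := by
  exact_mod_cast stmt_11_general M1 M2 N1 N2
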